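/- Fix k ≥ 1 and let N_k be the number of ordered pairs (p,q) ∈ D(k) × D(k) with d(p,q) = 1. Then there exist n₀ ∈ ℕ and a constant C > 0 such that for every integer n ≥ n₀: |n^k · ∑_{p,q ∈ D(k)} W_{kn}(p,q) − catalan k + N_k · n^{−1}| ≤ C · n^{−2}. (This is the second-order estimate for the moments of n^{1/2} u₁₁ in A_o(n).) -/

import Mathlib

open scoped BigOperators

/-- Non-crossing pair partitions of {1,…,2k}: fixed-point-free non-crossing
involutions of `Fin (2*k)`. -/
def NCPair (k : ℕ) : Type :=
  {p : Equiv.Perm (Fin (2 * k)) //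
    (∀ x, p (p x) = x) ∧ (∀ x, p x ≠ x) ∧
    ∀ a b c d : Fin (2 * k), a < b → b < c → c < d → p a = c → p b = d → False}

instance (k : ℕ) : Fintype (NCPair k) := by unfold NCPair; infer_instance

instance (k : ℕ) : DecidableEq (NCPair k) := by unfold NCPair; infer_instance

/-- `loops p q`: the number of loops obtained by closing the composed diagram,
i.e. the number of orbits of the subgroup generated by `p` and `q` on `Fin (2*k)`. -/
noncomputable def loops {k : ℕ} (p q : NCPair k) : ℕ :=
  Nat.card (MulAction.orbitRel.Quotient
    (↥(Subgroup.closure ({p.1, q.1} : Set (Equiv.Perm (Fin (2 * k)))))) (Fin (2 * k)))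

/-- The Gram matrix `G_{kn}(p,q) = n^{l(p,q)}`. -/
noncomputable def Gram (k n : ℕ) : Matrix (NCPair k) (NCPair k) ℝ :=
  fun p q => (n : ℝ) ^ loops p q

/-- The loop distance `d(p,q) = k - l(p,q)`. -/
noncomputable def loopDist {k : ℕ} (p q : NCPair k) : ℕ := k - loops p q

/-- N_k : the number of ordered pairs (p,q) of diagrams in D(k) at loop distance 1. -/
noncomputable def Ncount (k : ℕ) : ℕ :=
  Nat.card {pq : NCPair k × NCPair k // loopDist pq.1 pq.2 = 1}

/-!
Let `B j` be the `0`-`1` matrix of the relation `d(p, q) = j` on `D(k)`, so that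
`G = n ^ k ∑ⱼ n⁻ʲ B j`. Each orbit of `⟨p, q⟩` is a union of orbits of `⟨p⟩`, all of size two; hence
`l(p, q) ≤ k`, with equality iff the two orbit partitions agree, that is iff `p = q`. Thus
`B 0 = 1`, and the Neumann series gives `n ^ k G⁻¹ = 1 - n⁻¹ B 1 + O(n⁻²)`. Summing all entries
turns the first term into `|D(k)|` and the second into `-n⁻¹ N_k`. Finally `|D(k)|` is a Catalan
number because removing the arc at the least point of a non-crossing pairing leaves two
independent ones.
-/

section NoncrossingPairing

variable {α β : Type*} [LinearOrder α] [LinearOrder β]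

/-- Non-crossing pairings of a subset `s` of a linear order, encoded as involutions of the whole
order whose set of non-fixed points is exactly `s`. Being non-crossing is expressed as nesting:
a point under the arc from `x` to `f x` has its partner under that arc as well. -/
structure IsNoncrossingPairing (s : Set α) (f : α → α) : Prop where
  involutive : Function.Involutive f
  apply_ne_iff : ∀ x, f x ≠ x ↔ x ∈ s
  nested : ∀ ⦃x y⦄, x < y → y < f x → f y ≤ f x

/-- The type of non-crossing pairings of a subset of a linear order. -/
abbrev NoncrossingPairing (s : Set α) : Type _ := {f : α → α // IsNoncrossingPairing s f}

namespace IsNoncrossingPairing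

variable {s t : Set α} {f : α → α} {a b : α}

lemma apply_mem (hf : IsNoncrossingPairing s f) {x : α} (hx : x ∈ s) : f x ∈ s := by
  have := hf.apply_ne_iff x
  have := hf.apply_ne_iff (f x)
  grind [hf.involutive x]

lemma apply_eq_self (hf : IsNoncrossingPairing s f) {x : α} (hx : x ∉ s) : f x = x :=
  not_not.mp (mt (hf.apply_ne_iff x).mp hx)

lemma even_card {s : Finset α} (hf : IsNoncrossingPairing (s : Set α) f) : Even s.card := by
  rw [← ZMod.natCast_eq_zero_iff_even, Finset.cast_card]
  exact Finset.sum_involution (fun x _ ↦ f x) (fun _ _ ↦ CharTwo.add_self_eq_zero 1)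
    (fun x hx _ ↦ (hf.apply_ne_iff x).mpr hx) (fun _ hx ↦ hf.apply_mem hx)
    (fun x _ ↦ hf.involutive x)

lemma piecewise_id [DecidablePred (· ∈ t)] (hf : IsNoncrossingPairing s f) (hts : t ⊆ s)
    (hft : Set.MapsTo f t t) : IsNoncrossingPairing t (t.piecewise f id) where
  involutive x := by
    by_cases hx : x ∈ t
    · simp [hx, hft hx, hf.involutive x]
    · simp [hx]
  apply_ne_iff x := by
    by_cases hx : x ∈ t
    · simp [hx, (hf.apply_ne_iff x).mpr (hts hx)]
    · simp [hx]
  nested x y hxy hyx := by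
    have := hf.nested (x := x) (y := y)
    simp only [Set.piecewise, id] at *
    grind

lemma mapsTo_inter_Ioo (hf : IsNoncrossingPairing s f) (ha : a ∈ lowerBounds s) (hab : f a = b) :
    Set.MapsTo f (s ∩ Set.Ioo a b) (s ∩ Set.Ioo a b) := by
  rintro x ⟨hxs, hax, hxb⟩
  have hfx := hf.apply_mem hxs
  have hle : f x ≤ b := hab ▸ hf.nested hax (hab ▸ hxb)
  have hfa : f b = a := hab ▸ hf.involutive a
  exact ⟨hfx, (ha hfx).lt_of_ne fun h ↦ hxb.ne (by rw [← hab, h, hf.involutive x]),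
    hle.lt_of_ne fun h ↦ hax.ne (by rw [← hfa, ← h, hf.involutive x])⟩

lemma mapsTo_inter_Ioi (hf : IsNoncrossingPairing s f) (ha : a ∈ lowerBounds s) (hab : f a = b) :
    Set.MapsTo f (s ∩ Set.Ioi b) (s ∩ Set.Ioi b) := by
  rintro x ⟨hxs, hbx⟩
  have hfx := hf.apply_mem hxs
  refine ⟨hfx, lt_of_not_ge fun hle ↦ ?_⟩
  have := hf.mapsTo_inter_Ioo ha hab (x := f x)
  have := ha hxs
  grind [hf.involutive x, hf.involutive a, ha hfx]

lemma extend (hf : IsNoncrossingPairing Set.univ f) (e : α ↪o β) :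
    IsNoncrossingPairing (Set.range e) (Function.extend e (e ∘ f) id) where
  involutive y := by
    by_cases hy : y ∈ Set.range e
    · obtain ⟨x, rfl⟩ := hy
      simp [e.injective.extend_apply, hf.involutive x]
    · simp [Function.extend_apply' _ _ _ hy]
  apply_ne_iff y := by
    by_cases hy : y ∈ Set.range e
    · obtain ⟨x, rfl⟩ := hy
      simp [e.injective.extend_apply, (hf.apply_ne_iff x).mpr]
    · simpa [Function.extend_apply' _ _ _ hy] using hy
  nested x y hxy hyx := by
    by_cases hx : x ∈ Set.range e
    · obtain ⟨x, rfl⟩ := hx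
      rw [e.injective.extend_apply] at hyx ⊢
      by_cases hy : y ∈ Set.range e
      · obtain ⟨y, rfl⟩ := hy
        rw [e.injective.extend_apply]
        exact e.monotone (hf.nested (e.lt_iff_lt.mp hxy) (e.lt_iff_lt.mp hyx))
      · rw [Function.extend_apply' _ _ _ hy]
        exact hyx.le
    · rw [Function.extend_apply' _ _ _ hx] at hyx
      exact (hxy.asymm hyx).elim

end IsNoncrossingPairing

/-- The map exchanging `a` and `b`, and acting as `g` below the arc from `a` to `b` and as `h` to
the right of it; it puts a pairing together from its first arc and the two remaining parts. -/
def arch (a b : α) (g h : α → α) (x : α) : α :=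
  if x = a then b else if x = b then a else if x < b then g x else h x

lemma isNoncrossingPairing_arch {s t : Set α} {g h : α → α} {a b : α}
    (hg : IsNoncrossingPairing s g) (hh : IsNoncrossingPairing t h) (hab : a < b)
    (hs : s ⊆ Set.Ioo a b) (ht : t ⊆ Set.Ioi b) :
    IsNoncrossingPairing (insert a (insert b (s ∪ t))) (arch a b g h) where
  involutive x := by
    simp only [arch]
    grind [hg.involutive x, hh.involutive x, hg.apply_mem, hg.apply_eq_self, hh.apply_mem,
      hh.apply_eq_self]
  apply_ne_iff x := by
    simp only [arch]
    grind [hg.apply_ne_iff x, hh.apply_ne_iff x]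
  nested x y hxy hyx := by
    simp only [arch] at *
    have := hg.apply_mem (x := x)
    have := hg.apply_mem (x := y)
    have := hh.apply_mem (x := x)
    grind [hg.apply_eq_self, hh.apply_eq_self, hg.nested (x := x) (y := y),
      hh.nested (x := x) (y := y)]

namespace NoncrossingPairing

instance finite (s : Set α) [Finite s] : Finite (NoncrossingPairing s) := by
  refine Finite.of_injective
    (fun f : NoncrossingPairing s ↦ fun x : s ↦ (⟨f.1 x, f.2.apply_mem x.2⟩ : s))
    fun f g hfg ↦ Subtype.ext (funext fun x ↦ ?_)
  by_cases hx : x ∈ s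
  · exact congrArg Subtype.val (congrFun hfg ⟨x, hx⟩)
  · rw [f.2.apply_eq_self hx, g.2.apply_eq_self hx]

lemma card_empty : Nat.card (NoncrossingPairing (∅ : Set α)) = 1 := by
  have : Nonempty (NoncrossingPairing (∅ : Set α)) :=
    ⟨id, fun _ ↦ rfl, by simp, fun _ _ hxy hyx ↦ (hxy.asymm hyx).elim⟩
  have : Subsingleton (NoncrossingPairing (∅ : Set α)) :=
    ⟨fun f g ↦ Subtype.ext (funext fun x ↦ by
      rw [f.2.apply_eq_self (Set.notMem_empty x), g.2.apply_eq_self (Set.notMem_empty x)])⟩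
  exact Nat.card_of_subsingleton (Classical.arbitrary _)

open Classical in
/-- Removing the arc at the least point `a` of `s` splits a non-crossing pairing into its part
below the arc and its part to the right of the arc. -/
noncomputable def equivProd {s : Set α} {a b : α} (ha : IsLeast s a) (hb : b ∈ s) (hab : a < b) :
    {f : NoncrossingPairing s // f.1 a = b} ≃
      NoncrossingPairing (s ∩ Set.Ioo a b) × NoncrossingPairing (s ∩ Set.Ioi b) where
  toFun f :=
    (⟨_, f.1.2.piecewise_id Set.inter_subset_left (f.1.2.mapsTo_inter_Ioo ha.2 f.2)⟩,
      ⟨_, f.1.2.piecewise_id Set.inter_subset_left (f.1.2.mapsTo_inter_Ioi ha.2 f.2)⟩)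
  invFun gh := ⟨⟨arch a b gh.1.1 gh.2.1, by
    have harch := isNoncrossingPairing_arch gh.1.2 gh.2.2 hab Set.inter_subset_right
      Set.inter_subset_right
    have hs : insert a (insert b (s ∩ Set.Ioo a b ∪ s ∩ Set.Ioi b)) = s := by
      ext x
      have := ha.1
      have := @ha.2 x
      grind
    rwa [hs] at harch⟩,
    if_pos rfl⟩
  left_inv := by
    rintro ⟨⟨f, hf⟩, rfl⟩
    ext x
    have := @ha.2 x
    have := hf.apply_eq_self (x := x)
    simp only [arch, Set.piecewise, id]
    grind [hf.involutive a]
  right_inv := by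
    rintro ⟨⟨g, hg⟩, ⟨h, hh⟩⟩
    ext x
    · have := hg.apply_eq_self (x := x)
      simp only [arch, Set.piecewise, id]
      grind
    · have := hh.apply_eq_self (x := x)
      simp only [arch, Set.piecewise, id]
      grind

lemma exists_apply_eq_add {a m : ℕ} (f : NoncrossingPairing (Set.Ico a (a + 2 * (m + 1)))) :
    ∃ i : Fin (m + 1), f.1 a = a + 2 * i + 1 := by
  have ha : a ∈ Set.Ico a (a + 2 * (m + 1)) := by simp
  have hfa := f.2.apply_mem ha
  have hne : f.1 a ≠ a := (f.2.apply_ne_iff a).mpr ha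
  have hinner : Set.Ico a (a + 2 * (m + 1)) ∩ Set.Ioo a (f.1 a) = Finset.Ioo a (f.1 a) := by
    ext x
    grind [Finset.coe_Ioo]
  have heven : Even (Finset.Ioo a (f.1 a)).card := by
    classical
    refine (f.2.piecewise_id (t := Finset.Ioo a (f.1 a)) ?_ ?_).even_card
    · exact hinner ▸ Set.inter_subset_left
    · exact hinner ▸ f.2.mapsTo_inter_Ioo (fun x hx ↦ hx.1) rfl
  rw [Nat.card_Ioo] at heven
  obtain ⟨j, hj⟩ := heven
  simp only [Set.mem_Ico] at hfa
  exact ⟨⟨j, by omega⟩, by simp only; omega⟩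

lemma card_Ico_eq_sum (a m : ℕ) :
    Nat.card (NoncrossingPairing (Set.Ico a (a + 2 * (m + 1)))) =
      ∑ i : Fin (m + 1), Nat.card (NoncrossingPairing (Set.Ico (a + 1) (a + 1 + 2 * i))) *
        Nat.card (NoncrossingPairing
          (Set.Ico (a + 2 * i + 2) (a + 2 * i + 2 + 2 * (m - i)))) := by
  choose φ hφ using exists_apply_eq_add (a := a) (m := m)
  rw [← Nat.card_congr (Equiv.sigmaFiberEquiv φ), Nat.card_sigma]
  refine Finset.sum_congr rfl fun i _ ↦ ?_
  have hfiber (f) : φ f = i ↔ f.1 a = a + 2 * i + 1 := by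
    have := hφ f
    grind
  have ha : IsLeast (Set.Ico a (a + 2 * (m + 1))) a := isLeast_Ico (by omega)
  have hbelow : Set.Ico a (a + 2 * (m + 1)) ∩ Set.Ioo a (a + 2 * i + 1) =
      Set.Ico (a + 1) (a + 1 + 2 * i) := by
    ext x
    grind
  have hright : Set.Ico a (a + 2 * (m + 1)) ∩ Set.Ioi (a + 2 * i + 1) =
      Set.Ico (a + 2 * i + 2) (a + 2 * i + 2 + 2 * (m - i)) := by
    ext x
    grind
  rw [Nat.card_congr (Equiv.subtypeEquivRight hfiber),
    Nat.card_congr (equivProd ha (by grind) (by omega)), Nat.card_prod, hbelow, hright]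

theorem card_Ico (a m : ℕ) : Nat.card (NoncrossingPairing (Set.Ico a (a + 2 * m))) = catalan m := by
  induction m using Nat.strong_induction_on generalizing a with
  | _ m ih =>
    obtain _ | m := m
    · simpa using card_empty (α := ℕ)
    · rw [card_Ico_eq_sum, catalan_succ]
      exact Finset.sum_congr rfl fun i _ ↦ by rw [ih i (by omega), ih (m - i) (by omega)]

/-- Extension by the identity along an order embedding. -/
noncomputable def extend (e : α ↪o β) (f : NoncrossingPairing (Set.univ : Set α)) :
    NoncrossingPairing (Set.range e) :=
  ⟨Function.extend e (e ∘ f.1) id, f.2.extend e⟩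

lemma extend_bijective (e : α ↪o β) : Function.Bijective (extend e) := by
  constructor
  · intro f f' hff'
    ext x
    have := congrFun (congrArg Subtype.val hff') (e x)
    simpa [extend, e.injective.extend_apply] using this
  · rintro ⟨g, hg⟩
    choose f hf using fun x ↦ hg.apply_mem (Set.mem_range_self (f := e) x)
    refine ⟨⟨f, ⟨fun x ↦ ?_, fun x ↦ ?_, fun x y hxy hyx ↦ ?_⟩⟩, ?_⟩
    · rw [← e.injective.eq_iff, hf, hf, hg.involutive]
    · rw [← e.injective.ne_iff, hf, hg.apply_ne_iff]
      simp
    · rw [← e.le_iff_le, hf, hf]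
      exact hg.nested (e.lt_iff_lt.mpr hxy) (hf x ▸ e.lt_iff_lt.mpr hyx)
    · ext y
      by_cases hy : y ∈ Set.range e
      · obtain ⟨x, rfl⟩ := hy
        simp [extend, e.injective.extend_apply, hf]
      · simp only [extend, Function.extend_apply' _ _ _ hy, hg.apply_eq_self hy, id]

end NoncrossingPairing

/-- The pairings in `D(k)` are the non-crossing pairings of the whole of `Fin (2 * k)`. -/
def NCPair.equivNoncrossingPairing (k : ℕ) :
    NCPair k ≃ NoncrossingPairing (Set.univ : Set (Fin (2 * k))) where
  toFun p := ⟨p.1, p.2.1, fun x ↦ by simp [p.2.2.1 x],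
    fun x y hxy hyx ↦ le_of_not_gt fun h ↦ p.2.2.2 x y _ _ hxy hyx h rfl rfl⟩
  invFun f := ⟨f.2.involutive.toPerm, f.2.involutive, fun x ↦ (f.2.apply_ne_iff x).mpr trivial,
    by
      rintro a b _ _ hab hbc hcd rfl rfl
      exact (f.2.nested hab hbc).not_gt hcd⟩
  left_inv _ := Subtype.ext (Equiv.ext fun _ ↦ rfl)
  right_inv _ := rfl

theorem NCPair.card_eq_catalan (k : ℕ) : Fintype.card (NCPair k) = catalan k := by
  have hrange : Set.range (Fin.valOrderEmb (2 * k)) = Set.Ico 0 (0 + 2 * k) := by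
    ext x
    simp [Fin.exists_iff]
  rw [← NoncrossingPairing.card_Ico 0 k, ← hrange, ← Nat.card_eq_fintype_card]
  exact Nat.card_congr ((equivNoncrossingPairing k).trans
    (Equiv.ofBijective _ (NoncrossingPairing.extend_bijective _)))

end NoncrossingPairing

section Loops

section Setoid

variable {α : Type*} {r s : Setoid α}

lemma surjective_quotientMap_id (h : r ≤ s) :
    Function.Surjective (Quotient.map id h : Quotient r → Quotient s) :=
  Quotient.ind fun x ↦ ⟨⟦x⟧, rfl⟩

lemma card_quotient_le_of_le [Finite α] (h : r ≤ s) :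
    Nat.card (Quotient s) ≤ Nat.card (Quotient r) :=
  Nat.card_le_card_of_surjective _ (surjective_quotientMap_id h)

lemma eq_of_le_of_card_quotient_eq [Finite α] (h : r ≤ s)
    (hcard : Nat.card (Quotient s) = Nat.card (Quotient r)) : r = s := by
  have hinj := ((surjective_quotientMap_id h).bijective_of_nat_card_le hcard.ge).injective
  exact le_antisymm h fun x y hxy ↦ Quotient.exact (@hinj ⟦x⟧ ⟦y⟧ (Quotient.sound hxy))

end Setoid

lemma orbitRel_mono {G α : Type*} [Group G] [MulAction G α] {H K : Subgroup G} (h : H ≤ K) :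
    MulAction.orbitRel H α ≤ MulAction.orbitRel K α := by
  rintro _ y ⟨g, rfl⟩
  exact ⟨⟨g, h g.2⟩, rfl⟩

section Involution

variable {α : Type*} {p q : Equiv.Perm α}

lemma orbit_zpowers_of_involutive (hp : Function.Involutive p) (x : α) :
    MulAction.orbit (Subgroup.zpowers p) x = {x, p x} := by
  have hp2 : p ^ 2 = 1 := Equiv.ext fun y ↦ by simp [sq, hp y]
  ext y
  constructor
  · rintro ⟨⟨_, i, rfl⟩, rfl⟩
    obtain ⟨j, rfl | rfl⟩ := i.even_or_odd'
    · exact Or.inl (by simp [Subgroup.smul_def, zpow_mul, hp2])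
    · exact Or.inr (by simp [Subgroup.smul_def, zpow_add, zpow_mul, hp2])
  · rintro (rfl | rfl)
    · exact MulAction.mem_orbit_self y
    · exact ⟨⟨p, Subgroup.mem_zpowers p⟩, rfl⟩

lemma two_mul_card_orbits_zpowers [Finite α] (hp : Function.Involutive p) (hpx : ∀ x, p x ≠ x) :
    2 * Nat.card (MulAction.orbitRel.Quotient (Subgroup.zpowers p) α) = Nat.card α := by
  have := Fintype.ofFinite (MulAction.orbitRel.Quotient (Subgroup.zpowers p) α)
  have hcard (x : α) : Nat.card (MulAction.orbit (Subgroup.zpowers p) x) = 2 := by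
    rw [orbit_zpowers_of_involutive hp, Nat.card_coe_set_eq, Set.ncard_pair (hpx x).symm]
  rw [Nat.card_congr (MulAction.selfEquivSigmaOrbits (Subgroup.zpowers p) α), Nat.card_sigma]
  simp [hcard, mul_comm]

lemma eq_of_orbitRel_zpowers_eq (hp : Function.Involutive p) (hqx : ∀ x, q x ≠ x)
    (h : MulAction.orbitRel (Subgroup.zpowers p) α =
      MulAction.orbitRel (Subgroup.closure {p, q}) α) : p = q := by
  ext x
  have hq : MulAction.orbitRel (Subgroup.closure {p, q}) α (q x) x :=
    ⟨⟨q, Subgroup.subset_closure (by simp)⟩, rfl⟩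
  rw [← h, MulAction.orbitRel_apply, orbit_zpowers_of_involutive hp] at hq
  exact (hq.resolve_left (hqx x)).symm

end Involution

variable {k : ℕ} (p q : NCPair k)

lemma card_orbits_zpowers :
    Nat.card (MulAction.orbitRel.Quotient (Subgroup.zpowers p.1) (Fin (2 * k))) = k := by
  have := two_mul_card_orbits_zpowers p.2.1 p.2.2.1
  rw [Nat.card_fin] at this
  omega

lemma zpowers_le_closure_pair : Subgroup.zpowers p.1 ≤ Subgroup.closure {p.1, q.1} :=
  Subgroup.zpowers_le.mpr (Subgroup.subset_closure (Set.mem_insert _ _))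

lemma loops_le : loops p q ≤ k :=
  (card_quotient_le_of_le (orbitRel_mono (zpowers_le_closure_pair p q))).trans_eq
    (card_orbits_zpowers p)

lemma loops_self : loops p p = k := by
  rw [loops, Set.pair_eq_singleton, ← Subgroup.zpowers_eq_closure, card_orbits_zpowers]

variable {p q} in
lemma loops_eq_iff : loops p q = k ↔ p = q := by
  refine ⟨fun h ↦ Subtype.ext ?_, fun h ↦ h ▸ loops_self p⟩
  exact eq_of_orbitRel_zpowers_eq p.2.1 q.2.2.1
    (eq_of_le_of_card_quotient_eq (orbitRel_mono (zpowers_le_closure_pair p q))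
      (h.trans (card_orbits_zpowers p).symm))

variable {p q} in
lemma loopDist_eq_zero_iff : loopDist p q = 0 ↔ p = q := by
  rw [← loops_eq_iff, loopDist, Nat.sub_eq_zero_iff_le, (loops_le p q).ge_iff_eq]

end Loops

section Expansion

open Asymptotics Filter Topology

section NormedSpace

variable {β 𝕜 E : Type*} [NormedField 𝕜] [SeminormedAddCommGroup E] [NormedSpace 𝕜 E]
  {l : Filter β} {x : β → 𝕜}

lemma isBigO_smul_const_self (b : E) : (fun n ↦ x n • b) =O[l] x := by
  simpa using (isBigO_refl x l).smul (isBigO_const_const b (one_ne_zero (α := 𝕜)) l)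

lemma isBigO_sum_pow_smul_sub (b : ℕ → E) (m : ℕ) (hx : Tendsto x l (𝓝 0)) :
    (fun n ↦ ∑ j ∈ Finset.range (m + 2), x n ^ j • b j - b 0 - x n • b 1) =O[l]
      fun n ↦ x n ^ 2 := by
  have hterm (j : ℕ) : (fun n ↦ x n ^ (j + 2) • b (j + 2)) =O[l] fun n ↦ x n ^ 2 := by
    have hpow : (fun n ↦ x n ^ j) =O[l] fun _ ↦ (1 : 𝕜) := by
      simpa using (hx.isBigO_one 𝕜).pow j
    refine (isBigO_smul_const_self (b (j + 2))).trans ?_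
    simpa [pow_add] using hpow.mul (isBigO_refl (fun n ↦ x n ^ 2) l)
  refine (IsBigO.fun_sum (s := Finset.range m) fun j _ ↦ hterm j).congr_left fun n ↦ ?_
  rw [Finset.sum_range_succ', Finset.sum_range_succ']
  simp

end NormedSpace

lemma isBigO_linearMap_comp {β 𝕜 E F : Type*} [NontriviallyNormedField 𝕜] [CompleteSpace 𝕜]
    [NormedAddCommGroup E] [NormedSpace 𝕜 E] [FiniteDimensional 𝕜 E] [SeminormedAddCommGroup F]
    [NormedSpace 𝕜 F] (f : E →ₗ[𝕜] F) (u : β → E) (l : Filter β) : (fun n ↦ f (u n)) =O[l] u :=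
  f.toContinuousLinearMap.isBigO_comp u l

lemma isBigO_inverse_sub_one_add_smul {β 𝕜 R : Type*} [NormedField 𝕜] [NormedRing R]
    [NormedAlgebra 𝕜 R] [HasSummableGeomSeries R] {l : Filter β} {x : β → 𝕜} {a : β → R} {b : R}
    (hx : Tendsto x l (𝓝 0)) (ha : (fun n ↦ a n - 1 - x n • b) =O[l] fun n ↦ x n ^ 2) :
    (fun n ↦ Ring.inverse (a n) - 1 + x n • b) =O[l] fun n ↦ x n ^ 2 := by
  have hsq : (fun n ↦ x n ^ 2) =O[l] x := by
    simpa [sq] using (isBigO_refl x l).mul (hx.isBigO_one 𝕜)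
  have hfirst : (fun n ↦ a n - 1) =O[l] x :=
    ((ha.trans hsq).add (isBigO_smul_const_self b)).congr_left fun n ↦ sub_add_cancel _ _
  have hneumann : (fun n ↦ Ring.inverse (a n) - 1 + (a n - 1)) =O[l] fun n ↦ x n ^ 2 := by
    have hcomp := (NormedRing.inverse_add_norm_diff_second_order (1 : Rˣ)).comp_tendsto
      (hfirst.trans_tendsto hx)
    refine (hcomp.congr_left fun n ↦ ?_).trans (hfirst.norm_left.pow 2)
    simp
  exact (hneumann.sub ha).congr_left fun n ↦ by abel

lemma matrix_inv_smul₀ {ι K : Type*} [Fintype ι] [DecidableEq ι] [Field K] {c : K} (hc : c ≠ 0)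
    (A : Matrix ι ι K) : (c • A)⁻¹ = c⁻¹ • A⁻¹ := by
  have hone : (c • (1 : Matrix ι ι K))⁻¹ = c⁻¹ • 1 :=
    Matrix.inv_eq_left_inv (by simp [smul_smul, hc])
  rw [← mul_smul_one, Matrix.mul_inv_rev, hone, smul_one_mul]

/-- The `0`-`1` matrix of the relation of being at loop distance `j` on `D(k)`. -/
noncomputable def loopDistMatrix (k j : ℕ) : Matrix (NCPair k) (NCPair k) ℝ :=
  Matrix.of fun p q ↦ if loopDist p q = j then 1 else 0

lemma loopDistMatrix_zero (k : ℕ) : loopDistMatrix k 0 = 1 := by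
  ext p q
  simp [loopDistMatrix, Matrix.one_apply, loopDist_eq_zero_iff]

lemma sum_loopDistMatrix_one (k : ℕ) : ∑ p, ∑ q, loopDistMatrix k 1 p q = Ncount k := by
  simp only [loopDistMatrix, Matrix.of_apply, Ncount]
  rw [← Fintype.sum_prod_type' fun p q ↦ if loopDist p q = 1 then (1 : ℝ) else 0,
    Finset.sum_boole, Nat.card_eq_fintype_card, Fintype.card_subtype]

lemma gram_eq_smul_sum {k n m : ℕ} (hn : n ≠ 0) (hm : k < m) :
    Gram k n = (n : ℝ) ^ k • ∑ j ∈ Finset.range m, (n : ℝ)⁻¹ ^ j • loopDistMatrix k j := by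
  ext p q
  have hd : loopDist p q < m := (Nat.sub_le _ _).trans_lt hm
  have hpow : (n : ℝ) ^ loops p q = (n : ℝ) ^ k * (n : ℝ)⁻¹ ^ loopDist p q := by
    rw [inv_pow, loopDist, ← pow_sub₀ _ (Nat.cast_ne_zero.mpr hn) (Nat.sub_le _ _),
      Nat.sub_sub_self (loops_le p q)]
  simp [Gram, Matrix.sum_apply, loopDistMatrix, hpow, hd]

-- Any norm making the matrices a Banach algebra would do: they are all equivalent.
attribute [local instance] Matrix.linftyOpNormedRing Matrix.linftyOpNormedAlgebra

lemma isBigO_smul_inv_gram (k : ℕ) :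
    (fun n : ℕ ↦ (n : ℝ) ^ k • (Gram k n)⁻¹ - 1 + (n : ℝ)⁻¹ • loopDistMatrix k 1) =O[atTop]
      fun n ↦ (n : ℝ)⁻¹ ^ 2 := by
  have hx : Tendsto (fun n : ℕ ↦ (n : ℝ)⁻¹) atTop (𝓝 0) := tendsto_inv_atTop_nhds_zero_nat
  have hsum := isBigO_sum_pow_smul_sub (loopDistMatrix k) k hx
  rw [loopDistMatrix_zero] at hsum
  refine (isBigO_inverse_sub_one_add_smul hx hsum).congr' ?_ .rfl
  filter_upwards [eventually_ne_atTop 0] with n hn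
  have hnk : (n : ℝ) ^ k ≠ 0 := pow_ne_zero _ (Nat.cast_ne_zero.mpr hn)
  rw [gram_eq_smul_sum hn (show k < k + 2 by omega), matrix_inv_smul₀ hnk, smul_smul,
    mul_inv_cancel₀ hnk, one_smul, Matrix.nonsing_inv_eq_ringInverse]

lemma isBigO_mul_sum_inv_gram (k : ℕ) :
    (fun n : ℕ ↦ (n : ℝ) ^ k * (∑ p, ∑ q, (Gram k n)⁻¹ p q) - catalan k +
      Ncount k * (n : ℝ)⁻¹) =O[atTop] fun n ↦ (n : ℝ)⁻¹ ^ 2 := by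
  let entrySum : Matrix (NCPair k) (NCPair k) ℝ →ₗ[ℝ] ℝ :=
    ∑ p, ∑ q, Matrix.entryLinearMap ℝ ℝ p q
  have happly (A) : entrySum A = ∑ p, ∑ q, A p q := by simp [entrySum]
  have hone : entrySum 1 = catalan k := by
    simp [happly, Matrix.one_apply, ← NCPair.card_eq_catalan]
  have hdist : entrySum (loopDistMatrix k 1) = Ncount k := by
    rw [happly, sum_loopDistMatrix_one]
  refine ((isBigO_linearMap_comp entrySum _ _).trans
    (isBigO_smul_inv_gram k)).congr_left fun n ↦ ?_
  rw [map_add, map_sub, map_smul, map_smul, hone, hdist, happly, smul_eq_mul, smul_eq_mul,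
    mul_comm (n : ℝ)⁻¹]

end Expansion

/-- Second-order estimate for the moments of n^{1/2} u₁₁ in A_o(n):
n^k ∑_{p,q} W_{kn}(p,q) = catalan k − N_k n^{−1} + O(n^{−2}). -/
theorem moment_second_order (k : ℕ) (hk : 1 ≤ k) :
    ∃ n₀ : ℕ, ∃ C : ℝ, 0 < C ∧ ∀ n : ℕ, n₀ ≤ n →
      |(n : ℝ) ^ k * (∑ p : NCPair k, ∑ q : NCPair k, (Gram k n)⁻¹ p q)
          - catalan k + (Ncount k : ℝ) * (n : ℝ)⁻¹|
        ≤ C * ((n : ℝ)⁻¹) ^ 2 := by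
  obtain ⟨C, hC, hbound⟩ := (isBigO_mul_sum_inv_gram k).exists_pos
  obtain ⟨n₀, hn₀⟩ := Filter.eventually_atTop.mp hbound.bound
  refine ⟨n₀, C, hC, fun n hn ↦ ?_⟩
  simpa using hn₀ n hn
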